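/- Let P_i and P_j be real 3×4 matrices of rank 3 with distinct centers. Then the 3×3 matrix 𝓕(P_i, P_j) has rank exactly 2. -/

import Mathlib

/-!
Let `c` be the center of `P`, written as the vector of its signed maximal minors, and let `e = Q c`
be the epipole, which is nonzero because the centers are distinct. Cramer's relation among the three
rows of `P` and two rows of `Q`, five vectors in a four-dimensional space, says that
`fund P Q * P = [e]ₓ * Q`, where `[e]ₓ` is the matrix of the cross product with `e`. Since `P` and
`Q` are surjective as linear maps, `fund P Q` has the same rank as `[e]ₓ`, whose kernel is the line
through `e`.
-/

open Matrix

/-- The fundamental matrix of a camera pair `(P, Q)` of `3 × 4` matrices: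
its `(h,k)` entry is `(-1)^(h+k)` times the determinant of the `4 × 4` matrix
obtained by stacking the rows of `P` other than row `k` (in their original order)
on top of the rows of `Q` other than row `h` (in their original order). -/
def fund {K : Type*} [CommRing K] (P Q : Matrix (Fin 3) (Fin 4) K) :
    Matrix (Fin 3) (Fin 3) K :=
  Matrix.of fun h k =>
    (-1 : K) ^ ((h : ℕ) + (k : ℕ)) *
      (Matrix.of fun r c : Fin 4 =>
          if hr : (r : ℕ) < 2 then P (k.succAbove ⟨(r : ℕ), hr⟩) c
          else Q (h.succAbove ⟨(r : ℕ) - 2, by have := r.isLt; omega⟩) c).det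

section AppendRow

variable {R o : Type*} {n : ℕ}

/-- The matrix `A` with the row `v` added at the bottom. -/
def appendRow (A : Matrix (Fin n) o R) (v : o → R) : Matrix (Fin (n + 1)) o R :=
  of (Fin.snoc A.row v)

theorem appendRow_castSucc (A : Matrix (Fin n) o R) (v : o → R) (i : Fin n) :
    appendRow A v i.castSucc = A i :=
  Fin.snoc_castSucc (α := fun _ => o → R) v A.row i

theorem appendRow_last (A : Matrix (Fin n) o R) (v : o → R) :
    appendRow A v (Fin.last n) = v :=
  Fin.snoc_last (α := fun _ => o → R) v A.row

theorem appendRow_submatrix_last_succAbove (A : Matrix (Fin n) o R) (v : o → R) :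
    (appendRow A v).submatrix (Fin.last n).succAbove id = A := by
  ext i j
  rw [submatrix_apply, Fin.succAbove_last, appendRow_castSucc, id]

theorem appendRow_submatrix_castSucc_succAbove (A : Matrix (Fin (n + 1)) o R) (v : o → R)
    (k : Fin (n + 1)) :
    (appendRow A v).submatrix k.castSucc.succAbove id =
      appendRow (A.submatrix k.succAbove id) v := by
  ext i j
  cases i using Fin.lastCases with
  | last => simp [appendRow_last]
  | cast i => simp [appendRow_castSucc]

end AppendRow

section SignedMaximalMinors

variable {R : Type*} [CommRing R] {n : ℕ}

/-- The generalized cross product of the `n` rows of `P`: the vector of maximal minors of `P`, with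
alternating signs starting with `+`. For a `3 × 4` camera it represents the center. -/
def signedMaximalMinors (P : Matrix (Fin n) (Fin (n + 1)) R) : Fin (n + 1) → R :=
  fun j => (-1) ^ (j : ℕ) * (P.submatrix id j.succAbove).det

theorem det_appendRow (P : Matrix (Fin n) (Fin (n + 1)) R) (v : Fin (n + 1) → R) :
    (appendRow P v).det = (-1) ^ n * (v ⬝ᵥ signedMaximalMinors P) := by
  rw [det_succ_row _ (Fin.last n), dotProduct, Finset.mul_sum]
  refine Finset.sum_congr rfl fun j _ => ?_
  have minor_eq : (appendRow P v).submatrix (Fin.last n).succAbove j.succAbove =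
      P.submatrix id j.succAbove :=
    congrArg (·.submatrix id j.succAbove) (appendRow_submatrix_last_succAbove P v)
  rw [minor_eq, appendRow_last, Fin.val_last, signedMaximalMinors]
  ring

theorem mulVec_signedMaximalMinors (P : Matrix (Fin n) (Fin (n + 1)) R) :
    P *ᵥ signedMaximalMinors P = 0 := by
  ext i
  have repeated_row : (appendRow P (P i)).det = 0 :=
    det_zero_of_row_eq (Fin.castSucc_lt_last i).ne (by rw [appendRow_castSucc, appendRow_last])
  rw [det_appendRow] at repeated_row
  exact (isUnit_one.neg.pow n).mul_right_eq_zero.mp repeated_row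

theorem sum_mul_det_appendRow_appendRow (P : Matrix (Fin (n + 1)) (Fin (n + 2)) R)
    (u v : Fin (n + 2) → R) (j : Fin (n + 2)) :
    ∑ k, P k j *
        ((-1) ^ (k : ℕ) * (appendRow (appendRow (P.submatrix k.succAbove id) u) v).det) =
      (u ⬝ᵥ signedMaximalMinors P) * v j - (v ⬝ᵥ signedMaximalMinors P) * u j := by
  let A := appendRow (appendRow P u) v
  have minors_transpose (i : Fin (n + 3)) :
      signedMaximalMinors Aᵀ i = (-1) ^ (i : ℕ) * (A.submatrix i.succAbove id).det := by
    rw [signedMaximalMinors, ← transpose_submatrix, det_transpose]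
  -- The signed maximal minors of `Aᵀ` are the coefficients of a linear relation among the rows
  -- of `A`.
  have row_relation : ∑ i, A i j * signedMaximalMinors Aᵀ i = 0 :=
    congrFun (mulVec_signedMaximalMinors Aᵀ) j
  have sign_mul_self : (-1 : R) ^ (n + 1) * (-1) ^ (n + 1) = 1 := by
    rw [← mul_pow, neg_one_mul, neg_neg, one_pow]
  simp only [minors_transpose, Fin.sum_univ_castSucc (n := n + 2),
    Fin.sum_univ_castSucc (n := n + 1), A, appendRow_submatrix_castSucc_succAbove,
    appendRow_submatrix_last_succAbove, appendRow_castSucc, appendRow_last, det_appendRow P,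
    Fin.val_castSucc, Fin.val_last] at row_relation
  linear_combination row_relation +
    ((u ⬝ᵥ signedMaximalMinors P) * v j - (v ⬝ᵥ signedMaximalMinors P) * u j) * sign_mul_self

end SignedMaximalMinors

section Rank

variable {K : Type*} [Field K]

theorem rank_mul_eq_left_of_rank_eq_card {l m n : Type*} [Fintype m] [Fintype n]
    (A : Matrix l m K) {B : Matrix m n K} (hB : B.rank = Fintype.card m) :
    (A * B).rank = A.rank := by
  have range_B : LinearMap.range B.mulVecLin = ⊤ :=
    Submodule.eq_top_of_finrank_eq (hB.trans (Module.finrank_fintype_fun_eq_card K).symm)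
  rw [rank, mulVecLin_mul, LinearMap.range_comp_of_range_eq_top _ range_B, rank]

theorem linearIndependent_row_of_rank_eq_card {m n : Type*} [Fintype m] [Fintype n]
    {A : Matrix m n K} (hA : A.rank = Fintype.card m) : LinearIndependent K A.row :=
  linearIndependent_iff_card_eq_finrank_span.mpr (hA.symm.trans A.rank_eq_finrank_span_row)

variable {n : ℕ} {P : Matrix (Fin n) (Fin (n + 1)) K}

theorem signedMaximalMinors_ne_zero (hP : P.rank = n) : signedMaximalMinors P ≠ 0 := by
  have rows : LinearIndependent K P.row :=
    linearIndependent_row_of_rank_eq_card (by rw [hP, Fintype.card_fin])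
  obtain ⟨v, hv⟩ := exists_linearIndependent_snoc_of_lt_finrank rows (by simp)
  have det_isUnit := (isUnit_iff_isUnit_det _).mp (linearIndependent_rows_iff_isUnit.mp hv)
  intro minors_eq_zero
  apply det_isUnit.ne_zero
  exact (det_appendRow P v).trans (by rw [minors_eq_zero, dotProduct_zero, mul_zero])

theorem finrank_ker_mulVecLin_eq_one (hP : P.rank = n) :
    Module.finrank K (LinearMap.ker P.mulVecLin) = 1 := by
  have rank_nullity := LinearMap.finrank_range_add_finrank_ker P.mulVecLin
  rw [← rank, hP, Module.finrank_fin_fun] at rank_nullity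
  exact Nat.add_left_cancel rank_nullity

theorem ker_mulVecLin_eq_span_of_mulVec_eq_zero (hP : P.rank = n) {v : Fin (n + 1) → K}
    (hv : v ≠ 0) (hPv : P *ᵥ v = 0) : LinearMap.ker P.mulVecLin = K ∙ v := by
  refine (Submodule.eq_of_le_of_finrank_eq ?_ ?_).symm
  · rwa [Submodule.span_singleton_le_iff_mem, LinearMap.mem_ker, mulVecLin_apply]
  · rw [finrank_span_singleton hv, finrank_ker_mulVecLin_eq_one hP]

end Rank

section CrossMatrix

/-- The skew-symmetric matrix `[v]ₓ` of the linear map `w ↦ v ⨯₃ w`. -/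
def crossMatrix {R : Type*} [CommRing R] (v : Fin 3 → R) : Matrix (Fin 3) (Fin 3) R :=
  LinearMap.toMatrix' (crossProduct v)

theorem crossMatrix_mul_apply {R n : Type*} [CommRing R] (v : Fin 3 → R)
    (A : Matrix (Fin 3) n R) (i : Fin 3) (j : n) :
    (crossMatrix v * A) i j = (v ⨯₃ A.col j) i := by
  rw [crossMatrix, ← LinearMap.toMatrix'_mulVec (crossProduct v) (A.col j)]
  rfl

theorem ker_crossProduct {K : Type*} [Field K] {v : Fin 3 → K} (hv : v ≠ 0) :
    LinearMap.ker (crossProduct v) = K ∙ v := by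
  ext w
  rw [LinearMap.mem_ker, ← not_iff_not, ← ne_eq, crossProduct_ne_zero_iff_linearIndependent,
    LinearIndependent.pair_iff' hv, Submodule.mem_span_singleton, not_exists]

theorem rank_crossMatrix {K : Type*} [Field K] {v : Fin 3 → K} (hv : v ≠ 0) :
    (crossMatrix v).rank = 2 := by
  have rank_nullity := LinearMap.finrank_range_add_finrank_ker (crossProduct v)
  rw [ker_crossProduct hv, finrank_span_singleton hv, Module.finrank_fin_fun] at rank_nullity
  rw [rank, crossMatrix, ← toLin'_apply', toLin'_toMatrix']
  exact Nat.add_right_cancel rank_nullity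

end CrossMatrix

section Epipole

variable {R : Type*} [CommRing R]

/-- The epipole of the camera pair `(P, Q)` in the second image: the image under `Q` of the center
of `P`. -/
def epipole (P Q : Matrix (Fin 3) (Fin 4) R) : Fin 3 → R :=
  Q *ᵥ signedMaximalMinors P

theorem fund_apply (P Q : Matrix (Fin 3) (Fin 4) R) (h k : Fin 3) :
    fund P Q h k = (-1) ^ ((h : ℕ) + k) *
      (appendRow (appendRow (P.submatrix k.succAbove id) (Q (h.succAbove 0)))
        (Q (h.succAbove 1))).det := by
  rw [fund, of_apply]
  congr 2
  ext r c
  fin_cases r <;> rfl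

theorem fund_mul (P Q : Matrix (Fin 3) (Fin 4) R) :
    fund P Q * P = crossMatrix (epipole P Q) * Q := by
  ext h j
  have row_eq : (fund P Q * P) h j = (-1) ^ (h : ℕ) *
      (epipole P Q (h.succAbove 0) * Q (h.succAbove 1) j -
        epipole P Q (h.succAbove 1) * Q (h.succAbove 0) j) := by
    rw [epipole, mulVec, mulVec, ← sum_mul_det_appendRow_appendRow, mul_apply, Finset.mul_sum]
    refine Finset.sum_congr rfl fun k _ => ?_
    rw [fund_apply, pow_add]
    ring
  rw [row_eq, crossMatrix_mul_apply, cross_apply]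
  fin_cases h <;> simp [Fin.succAbove]

end Epipole

section FundamentalMatrix

variable {K : Type*} [Field K] {P Q : Matrix (Fin 3) (Fin 4) K}

theorem epipole_ne_zero (hP : P.rank = 3) (hQ : Q.rank = 3)
    (hPQ : LinearMap.ker P.mulVecLin ≠ LinearMap.ker Q.mulVecLin) : epipole P Q ≠ 0 := by
  intro epipole_eq_zero
  have center_ne_zero := signedMaximalMinors_ne_zero hP
  apply hPQ
  rw [ker_mulVecLin_eq_span_of_mulVec_eq_zero hP center_ne_zero (mulVec_signedMaximalMinors P),
    ker_mulVecLin_eq_span_of_mulVec_eq_zero hQ center_ne_zero epipole_eq_zero]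

theorem fund_rank_eq_two_general (hP : P.rank = 3) (hQ : Q.rank = 3)
    (hPQ : LinearMap.ker P.mulVecLin ≠ LinearMap.ker Q.mulVecLin) : (fund P Q).rank = 2 :=
  calc (fund P Q).rank
    _ = (fund P Q * P).rank := (rank_mul_eq_left_of_rank_eq_card _ hP).symm
    _ = (crossMatrix (epipole P Q) * Q).rank := by rw [fund_mul]
    _ = (crossMatrix (epipole P Q)).rank := rank_mul_eq_left_of_rank_eq_card _ hQ
    _ = 2 := rank_crossMatrix (epipole_ne_zero hP hQ hPQ)

end FundamentalMatrix

/-- for cameras (rank-3 matrices) `Pi`, `Pj` with distinct centers,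
the fundamental matrix has rank exactly 2. -/
theorem fund_rank_eq_two (Pi Pj : Matrix (Fin 3) (Fin 4) ℝ)
    (hi : Pi.rank = 3) (hj : Pj.rank = 3)
    (hc : LinearMap.ker Pi.mulVecLin ≠ LinearMap.ker Pj.mulVecLin) :
    (fund Pi Pj).rank = 2 :=
  fund_rank_eq_two_general hi hj hc
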